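/- Let F = F_1 × ⋯ × F_m be a product Borel probability distribution on [0,∞)^m where each marginal F_j has the same mean μ > 0 and variance at most σ². Let F_Y be the distribution of the sum Y = v_1 + ⋯ + v_m of independent v_j ∼ F_j. Then the log-lottery on the full bundle with parameters (mμ, √m·σ) satisfies REV(P^log_{mμ,√m·σ};F_Y) ≥ OPT_m(F)/ρ(σ/(μ√m)); that is, full bundling achieves robust approximation ratio at most ρ(r/√m) where r = σ/μ. -/

import Mathlib

open MeasureTheory

/-- Revenue of posting price `p` against valuation distribution `F`:
`REV(p;F) = p · P(X ≥ p)`. -/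
noncomputable def rev (F : Measure ℝ) (p : ℝ) : ℝ :=
  p * (F (Set.Ici p)).toReal

/-- Optimal revenue `OPT(F) = sup_{p ≥ 0} p · P(X ≥ p)`. -/
noncomputable def opt (F : Measure ℝ) : ℝ :=
  ⨆ p ∈ Set.Ici (0 : ℝ), rev F p

/-- Revenue of a randomized pricing mechanism `A` (a measure over prices):
`REV(A;F) = E_{p∼A}[REV(p;F)]`. -/
noncomputable def mrev (A F : Measure ℝ) : ℝ :=
  ∫ p, rev F p ∂A

/-- `F` is a `(μ,σ)`-distributed distribution: a probability measure on `[0,∞)`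
with mean `m` and variance at most `s²`. -/
structure MeanVarLe (F : Measure ℝ) (m s : ℝ) : Prop where
  prob : IsProbabilityMeasure F
  supp : F (Set.Iio 0) = 0
  int_mean : Integrable (fun x => x) F
  int_sq : Integrable (fun x => x ^ 2) F
  mean : ∫ x, x ∂F = m
  var_le : ∫ x, (x - m) ^ 2 ∂F ≤ s ^ 2

/-- A randomized pricing mechanism: a probability measure over prices in `[0,∞)`. -/
def IsPriceMech (A : Measure ℝ) : Prop :=
  IsProbabilityMeasure A ∧ A (Set.Iio 0) = 0

/-- The log-lottery `P^log` with parameters `p1 ≤ p2`: the probability measure supported on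
`[p1,p2]` whose cdf on `[p1,p2)` is
`x ↦ (p2·ln(x/p1) − (x−p1)) / (p2·ln(p2/p1) − (p2−p1))`
(for `p1 = p2` this is the point mass at `p1`). -/
structure IsLogLottery (A : Measure ℝ) (p1 p2 : ℝ) : Prop where
  prob : IsProbabilityMeasure A
  supp : A (Set.Icc p1 p2) = 1
  cdf : ∀ x ∈ Set.Ico p1 p2,
    A (Set.Iic x) = ENNReal.ofReal
      ((p2 * Real.log (x / p1) - (x - p1)) / (p2 * Real.log (p2 / p1) - (p2 - p1)))

/-- A (direct revelation, possibly randomized) truthful selling mechanism for `m` items and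
a single additive buyer: an allocation rule `alloc : [0,∞)^m → [0,1]^m` and a payment rule
`pay : [0,∞)^m → [0,∞)` satisfying incentive compatibility and individual rationality. -/
structure TruthfulMech (m : ℕ) where
  alloc : (Fin m → ℝ) → Fin m → ℝ
  pay : (Fin m → ℝ) → ℝ
  alloc_meas : Measurable alloc
  pay_meas : Measurable pay
  alloc_nonneg : ∀ v i, 0 ≤ alloc v i
  alloc_le_one : ∀ v i, alloc v i ≤ 1
  pay_nonneg : ∀ v, 0 ≤ pay v
  ic : ∀ v w : Fin m → ℝ, (∀ i, 0 ≤ v i) → (∀ i, 0 ≤ w i) →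
    (∑ i, alloc w i * v i) - pay w ≤ (∑ i, alloc v i * v i) - pay v
  ir : ∀ v : Fin m → ℝ, (∀ i, 0 ≤ v i) → 0 ≤ (∑ i, alloc v i * v i) - pay v

/-- Expected revenue of a truthful `m`-item mechanism on the joint distribution `F`. -/
noncomputable def mrevM {m : ℕ} (M : TruthfulMech m) (F : Measure (Fin m → ℝ)) : ℝ :=
  ∫ v, M.pay v ∂F

/-- Optimal revenue `OPT_m(F)`: the supremum of expected revenue over all truthful
mechanisms for `m` items. -/
noncomputable def optM (m : ℕ) (F : Measure (Fin m → ℝ)) : ℝ :=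
  ⨆ M : TruthfulMech m, mrevM M F

open ProbabilityTheory

/-- Under a product of distributions on `[0,∞)`, all coordinates are a.s. nonnegative. -/
theorem MeanVarLe.ae_nonneg_pi {m : ℕ} {μ σ : ℝ} {Fs : Fin m → Measure ℝ}
    (hmarg : ∀ j, MeanVarLe (Fs j) μ σ) : ∀ᵐ v ∂(Measure.pi Fs), ∀ j, 0 ≤ v j := by
  have hprob : ∀ j, IsProbabilityMeasure (Fs j) := fun j => (hmarg j).prob
  refine ae_all_iff.2 fun j => Measure.tendsto_eval_ae_ae.eventually
    (p := fun x : ℝ => 0 ≤ x) ?_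
  rw [ae_iff]
  simpa [Set.Iio] using (hmarg j).supp

theorem MeanVarLe.integrable_eval_pi {m : ℕ} {μ σ : ℝ} {Fs : Fin m → Measure ℝ}
    (hmarg : ∀ j, MeanVarLe (Fs j) μ σ) (j : Fin m) :
    Integrable (fun v : Fin m → ℝ => v j) (Measure.pi Fs) := by
  have hprob : ∀ j, IsProbabilityMeasure (Fs j) := fun j => (hmarg j).prob
  exact integrable_comp_eval (μ := Fs) (i := j) (f := fun x : ℝ => x) (hmarg j).int_mean

theorem MeanVarLe.integral_sum_pi {m : ℕ} {μ σ : ℝ} {Fs : Fin m → Measure ℝ}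
    (hmarg : ∀ j, MeanVarLe (Fs j) μ σ) :
    ∫ v, ∑ j, v j ∂(Measure.pi Fs) = m * μ := by
  have hprob : ∀ j, IsProbabilityMeasure (Fs j) := fun j => (hmarg j).prob
  rw [integral_finsetSum _ fun j _ => MeanVarLe.integrable_eval_pi hmarg j]
  have h : ∀ j, ∫ v : Fin m → ℝ, v j ∂(Measure.pi Fs) = μ := fun j => by
    rw [integral_comp_eval (μ := Fs) (i := j) (f := fun x : ℝ => x) (by fun_prop), (hmarg j).mean]
  simp [h]

/-- The sum of independent `(μ,σ)`-distributed values is `(mμ, √m·σ)`-distributed. -/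
theorem MeanVarLe.map_sum_pi {m : ℕ} {μ σ : ℝ} {Fs : Fin m → Measure ℝ}
    (hmarg : ∀ j, MeanVarLe (Fs j) μ σ) :
    MeanVarLe ((Measure.pi Fs).map (fun v => ∑ j, v j)) (m * μ) (Real.sqrt m * σ) := by
  have hprob : ∀ j, IsProbabilityMeasure (Fs j) := fun j => (hmarg j).prob
  have hmeas : Measurable (fun v : Fin m → ℝ => ∑ j, v j) := by fun_prop
  have hL2 : ∀ j, MemLp (fun x : ℝ => x) 2 (Fs j) := fun j =>
    (memLp_two_iff_integrable_sq (by fun_prop)).2 (hmarg j).int_sq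
  have hsum : (∑ j, fun v : Fin m → ℝ => v j) = fun v => ∑ j, v j := by
    ext v; simp
  have hL2sum : MemLp (fun v : Fin m → ℝ => ∑ j, v j) 2 (Measure.pi Fs) :=
    memLp_finsetSum _ fun j _ =>
      (hL2 j).comp_measurePreserving (measurePreserving_eval Fs j)
  have hmean := MeanVarLe.integral_sum_pi hmarg
  have hvar : Var[fun v : Fin m → ℝ => ∑ j, v j; Measure.pi Fs] ≤ m * σ ^ 2 := by
    rw [← hsum, variance_sum_pi hL2]
    calc ∑ j, Var[fun x => x; Fs j] ≤ ∑ _j : Fin m, σ ^ 2 := by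
          refine Finset.sum_le_sum fun j _ => ?_
          rw [variance_eq_integral (by fun_prop), (hmarg j).mean]
          exact (hmarg j).var_le
      _ = m * σ ^ 2 := by simp
  refine ⟨Measure.isProbabilityMeasure_map hmeas.aemeasurable, ?_, ?_, ?_, ?_, ?_⟩
  · rw [Measure.map_apply hmeas measurableSet_Iio, measure_eq_zero_iff_ae_notMem]
    filter_upwards [MeanVarLe.ae_nonneg_pi hmarg] with v hv
    simpa using Finset.sum_nonneg fun j _ => hv j
  · rw [integrable_map_measure (by fun_prop) hmeas.aemeasurable]
    exact hL2sum.integrable (by norm_num)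
  · rw [integrable_map_measure (by fun_prop) hmeas.aemeasurable]
    exact hL2sum.integrable_sq
  · rw [integral_map hmeas.aemeasurable (by fun_prop), hmean]
  · rw [integral_map hmeas.aemeasurable (by fun_prop), mul_pow, Real.sq_sqrt (by positivity)]
    rwa [variance_eq_integral hmeas.aemeasurable, hmean] at hvar

/-- Individual rationality bounds the optimal revenue by the total expected value. -/
theorem optM_pi_le {m : ℕ} {μ σ : ℝ} (hμ : 0 ≤ μ) {Fs : Fin m → Measure ℝ}
    (hmarg : ∀ j, MeanVarLe (Fs j) μ σ) : optM m (Measure.pi Fs) ≤ m * μ := by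
  refine Real.iSup_le (fun M => ?_) (by positivity)
  rw [mrevM, ← MeanVarLe.integral_sum_pi hmarg]
  refine integral_mono_of_nonneg (ae_of_all _ M.pay_nonneg)
    (integrable_finsetSum _ fun j _ => MeanVarLe.integrable_eval_pi hmarg j) ?_
  filter_upwards [MeanVarLe.ae_nonneg_pi hmarg] with v hv
  have h : ∑ i, M.alloc v i * v i ≤ ∑ i, v i :=
    Finset.sum_le_sum fun i _ => mul_le_of_le_one_left (hv i) (M.alloc_le_one v i)
  linarith [M.ir v hv]

/-- The normalizing constant of the log-lottery is positive. -/
theorem logLottery_normalizer_pos {p1 p2 : ℝ} (h1 : 0 < p1) (h12 : p1 < p2) :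
    0 < p2 * Real.log (p2 / p1) - (p2 - p1) := by
  have h2 : 0 < p2 := h1.trans h12
  have h := Real.log_lt_sub_one_of_pos (div_pos h1 h2) ((div_lt_one h2).2 h12).ne
  have hlog : Real.log (p2 / p1) = -Real.log (p1 / p2) := by
    rw [← Real.log_inv, inv_div]
  have hmul := mul_lt_mul_of_pos_left h h2
  have : p2 * (p1 / p2 - 1) = p1 - p2 := by field_simp
  rw [hlog]
  linarith

theorem lintegral_logLottery_density {p1 p2 b D : ℝ} (h1 : 0 < p1) (hb1 : p1 ≤ b) (hb2 : b ≤ p2)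
    (hD : 0 < D) :
    ∫⁻ x in Set.Ioc p1 b, ENNReal.ofReal ((p2 / x - 1) / D) =
      ENNReal.ofReal ((p2 * Real.log (b / p1) - (b - p1)) / D) := by
  have hcont : ContinuousOn (fun x : ℝ => (p2 / x - 1) / D) (Set.uIcc p1 b) := by
    rw [Set.uIcc_of_le hb1]
    refine ((continuousOn_const.div continuousOn_id fun x hx => ?_).sub
      continuousOn_const).div_const D
    exact (h1.trans_le hx.1).ne'
  have hii : IntervalIntegrable (fun x : ℝ => (p2 / x - 1) / D) volume p1 b :=
    hcont.intervalIntegrable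
  rw [← ofReal_integral_eq_lintegral_ofReal ((intervalIntegrable_iff_integrableOn_Ioc_of_le hb1).1
    hii)]
  · rw [← intervalIntegral.integral_of_le hb1]
    congr 1
    have hderiv : ∀ x ∈ Set.uIcc p1 b,
        HasDerivAt (fun x => (p2 * Real.log x - x) / D) ((p2 / x - 1) / D) x := by
      intro x hx
      rw [Set.uIcc_of_le hb1] at hx
      have hx0 : x ≠ 0 := (h1.trans_le hx.1).ne'
      exact (((Real.hasDerivAt_log hx0).const_mul p2).sub (hasDerivAt_id x)).div_const D
    rw [intervalIntegral.integral_eq_sub_of_hasDerivAt hderiv hii,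
      Real.log_div (h1.trans_le hb1).ne' h1.ne']
    ring
  · filter_upwards [ae_restrict_mem measurableSet_Ioc] with x hx
    have hx0 : 0 < x := h1.trans hx.1
    exact div_nonneg (sub_nonneg.2 ((one_le_div hx0).2 (hx.2.trans hb2))) hD.le

/-- The log-lottery has density `(p2/x - 1)/D` on `(p1,p2]`. -/
theorem IsLogLottery.eq_withDensity {A : Measure ℝ} {p1 p2 : ℝ} (h1 : 0 < p1) (h12 : p1 < p2)
    (hA : IsLogLottery A p1 p2) :
    A = (volume.restrict (Set.Ioc p1 p2)).withDensity fun x =>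
      ENNReal.ofReal ((p2 / x - 1) / (p2 * Real.log (p2 / p1) - (p2 - p1))) := by
  have hD := logLottery_normalizer_pos h1 h12
  have := hA.prob
  have hc : A (Set.Icc p1 p2)ᶜ = 0 := (prob_compl_eq_zero_iff measurableSet_Icc).2 hA.supp
  refine Measure.ext_of_Iic _ _ fun x => ?_
  rw [withDensity_apply _ measurableSet_Iic, Measure.restrict_restrict measurableSet_Iic]
  rcases lt_or_ge x p1 with hx | hx
  · have hempty : Set.Iic x ∩ Set.Ioc p1 p2 = ∅ := by
      ext y; simp only [Set.mem_inter_iff, Set.mem_Iic, Set.mem_Ioc, Set.mem_empty_iff_false,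
        iff_false]; intro h; linarith [h.1, h.2.1]
    rw [hempty, Measure.restrict_empty, lintegral_zero_measure]
    have hsub : Set.Iic x ⊆ (Set.Icc p1 p2)ᶜ := fun y hy hmem =>
      (hx.trans_le hmem.1).not_ge hy
    exact measure_mono_null hsub hc
  rcases lt_or_ge x p2 with hx2 | hx2
  · have hset : Set.Iic x ∩ Set.Ioc p1 p2 = Set.Ioc p1 x := by
      ext y; simp only [Set.mem_inter_iff, Set.mem_Iic, Set.mem_Ioc]
      exact ⟨fun h => ⟨h.2.1, h.1⟩, fun h => ⟨h.2, h.1, h.2.trans hx2.le⟩⟩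
    rw [hset, lintegral_logLottery_density h1 hx hx2.le hD, hA.cdf x ⟨hx, hx2⟩]
  · have hset : Set.Iic x ∩ Set.Ioc p1 p2 = Set.Ioc p1 p2 :=
      Set.inter_eq_right.2 fun y hy => hy.2.trans hx2
    rw [hset, lintegral_logLottery_density h1 h12.le le_rfl hD, div_self hD.ne',
      ENNReal.ofReal_one]
    refine le_antisymm prob_le_one ?_
    rw [← hA.supp]
    exact measure_mono fun y hy => hy.2.trans hx2

/-- Revenue of the log-lottery from a buyer of value `b ∈ [p1,p2]`. -/
theorem IsLogLottery.setIntegral_Iic {A : Measure ℝ} {p1 p2 b : ℝ} (h1 : 0 < p1) (h12 : p1 < p2)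
    (hA : IsLogLottery A p1 p2) (hb1 : p1 ≤ b) (hb2 : b ≤ p2) :
    ∫ p in Set.Iic b, p ∂A = (p2 * (b - p1) - (b ^ 2 - p1 ^ 2) / 2) /
      (p2 * Real.log (p2 / p1) - (p2 - p1)) := by
  have hD := logLottery_normalizer_pos h1 h12
  rw [hA.eq_withDensity h1 h12]
  set D := p2 * Real.log (p2 / p1) - (p2 - p1)
  have hset : Set.Iic b ∩ Set.Ioc p1 p2 = Set.Ioc p1 b := by
    ext y; simp only [Set.mem_inter_iff, Set.mem_Iic, Set.mem_Ioc]
    exact ⟨fun h => ⟨h.2.1, h.1⟩, fun h => ⟨h.2, h.1, h.2.trans hb2⟩⟩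
  rw [setIntegral_withDensity_eq_setIntegral_toReal_smul (by fun_prop)
    (ae_of_all _ fun _ => ENNReal.ofReal_lt_top) _ measurableSet_Iic,
    Measure.restrict_restrict measurableSet_Iic, hset]
  have hcongr : ∫ x in Set.Ioc p1 b, (ENNReal.ofReal ((p2 / x - 1) / D)).toReal • x =
      ∫ x in Set.Ioc p1 b, (p2 - x) / D := by
    refine setIntegral_congr_fun measurableSet_Ioc fun x hx => ?_
    have hx0 : 0 < x := h1.trans hx.1
    have hnn : 0 ≤ (p2 / x - 1) / D :=
      div_nonneg (sub_nonneg.2 ((one_le_div hx0).2 (hx.2.trans hb2))) hD.le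
    simp only [ENNReal.toReal_ofReal hnn, smul_eq_mul]
    field_simp
  rw [hcongr, ← intervalIntegral.integral_of_le hb1, intervalIntegral.integral_div,
    intervalIntegral.integral_sub (by simp) (by simp)]
  simp
  ring

/-- The ex-post revenue of the log-lottery dominates a concave quadratic in the buyer's value. -/
theorem IsLogLottery.le_setIntegral_Iic {A : Measure ℝ} {p1 p2 : ℝ} (h1 : 0 < p1) (h12 : p1 < p2)
    (hA : IsLogLottery A p1 p2) (y : ℝ) :
    (p2 * (y - p1) - (y ^ 2 - p1 ^ 2) / 2) / (p2 * Real.log (p2 / p1) - (p2 - p1)) ≤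
      ∫ p in Set.Iic y, p ∂A := by
  have hD := logLottery_normalizer_pos h1 h12
  have := hA.prob
  have hmem : ∀ᵐ p ∂A, p ∈ Set.Icc p1 p2 :=
    (prob_compl_eq_zero_iff measurableSet_Icc).2 hA.supp
  have hnn : 0 ≤ᵐ[A] fun p => p := hmem.mono fun p hp => h1.le.trans hp.1
  rcases lt_or_ge y p1 with hy | hy
  · refine le_trans (div_nonpos_of_nonpos_of_nonneg ?_ hD.le)
      (integral_nonneg_of_ae (ae_restrict_of_ae hnn))
    nlinarith [mul_pos (sub_pos.2 hy) (sub_pos.2 h12)]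
  rcases le_total y p2 with hy2 | hy2
  · exact (hA.setIntegral_Iic h1 h12 hy hy2).ge
  · have hint : Integrable (fun p : ℝ => p) A := by
      refine Integrable.of_bound (C := p2) (by fun_prop) (hmem.mono fun p hp => ?_)
      rw [Real.norm_of_nonneg (h1.le.trans hp.1)]
      exact hp.2
    calc _ ≤ (p2 * (p2 - p1) - (p2 ^ 2 - p1 ^ 2) / 2) /
          (p2 * Real.log (p2 / p1) - (p2 - p1)) := by
          refine div_le_div_of_nonneg_right ?_ hD.le
          nlinarith [sq_nonneg (y - p2)]
      _ = ∫ p in Set.Iic p2, p ∂A := (hA.setIntegral_Iic h1 h12 h12.le le_rfl).symm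
      _ ≤ _ := setIntegral_mono_set hint.integrableOn (ae_restrict_of_ae hnn)
          (Set.Iic_subset_Iic.2 hy2).eventuallyLE

/-- Expected revenue as the expectation over values of the ex-post revenue. -/
theorem mrev_eq_integral_setIntegral {A F : Measure ℝ} [IsProbabilityMeasure A]
    [IsProbabilityMeasure F] (hint : Integrable (fun p : ℝ => p) A) :
    Integrable (fun y => ∫ p in Set.Iic y, p ∂A) F ∧
      mrev A F = ∫ y, ∫ p in Set.Iic y, p ∂A ∂F := by
  have hset : MeasurableSet {z : ℝ × ℝ | z.1 ≤ z.2} :=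
    measurableSet_le measurable_fst measurable_snd
  have hprod : Integrable (Function.uncurry fun p y : ℝ => (Set.Iic y).indicator (fun p => p) p)
      (A.prod F) :=
    (hint.comp_fst F).indicator hset
  have hinner : ∀ y, ∫ p, (Set.Iic y).indicator (fun p => p) p ∂A = ∫ p in Set.Iic y, p ∂A :=
    fun y => integral_indicator measurableSet_Iic
  constructor
  · simpa only [← hinner, Function.uncurry_apply_pair] using hprod.integral_prod_right
  · simp only [← hinner]
    rw [← integral_integral_swap hprod, mrev]
    congr with p
    have : (fun y => (Set.Iic y).indicator (fun p : ℝ => p) p) =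
        (Set.Ici p).indicator fun _ => p := by
      ext y; simp [Set.indicator]
    rw [this, integral_indicator measurableSet_Ici]
    simp [rev, Measure.real, mul_comm]

/-- The log-lottery guarantees expected revenue `p1` against every `(M,S)`-distribution. -/
theorem IsLogLottery.le_mrev {A F : Measure ℝ} {p1 p2 M S : ℝ} (h1 : 0 < p1) (h12 : p1 ≤ p2)
    (hM : p1 * (1 + Real.log (p2 / p1)) = M) (hS : p1 * (2 * p2 - p1) = M ^ 2 + S ^ 2)
    (hA : IsLogLottery A p1 p2) (hF : MeanVarLe F M S) : p1 ≤ mrev A F := by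
  have := hA.prob
  have := hF.prob
  have hmem : ∀ᵐ p ∂A, p ∈ Set.Icc p1 p2 :=
    (prob_compl_eq_zero_iff measurableSet_Icc).2 hA.supp
  rcases h12.eq_or_lt with rfl | h12
  · rw [div_self h1.ne', Real.log_one, add_zero, mul_one] at hM
    subst hM
    have hS0 : S ^ 2 = 0 := by nlinarith
    have hmeas : AEMeasurable (fun x : ℝ => x) F := by fun_prop
    have hvar : Var[fun x => x; F] = 0 := by
      refine le_antisymm ?_ (variance_nonneg _ _)
      rw [variance_eq_integral hmeas, hF.mean, ← hS0]
      exact hF.var_le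
    have hae := ae_eq_integral_of_variance_eq_zero
      ((memLp_two_iff_integrable_sq (by fun_prop)).2 hF.int_sq) hvar
    rw [hF.mean] at hae
    have hIci : F (Set.Ici p1) = 1 :=
      (prob_compl_eq_zero_iff measurableSet_Ici).1 (hae.mono fun x hx => hx.ge)
    have hrev : ∀ᵐ p ∂A, rev F p = p1 := by
      filter_upwards [hmem] with p hp
      obtain rfl : p = p1 := le_antisymm hp.2 hp.1
      simp [rev, hIci]
    rw [mrev, integral_congr_ae hrev]
    simp
  · have hD := logLottery_normalizer_pos h1 h12
    have hint : Integrable (fun p : ℝ => p) A := by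
      refine Integrable.of_bound (C := p2) (by fun_prop) (hmem.mono fun p hp => ?_)
      rw [Real.norm_of_nonneg (h1.le.trans hp.1)]
      exact hp.2
    obtain ⟨hinner, heq⟩ := mrev_eq_integral_setIntegral (F := F) hint
    have hsq : ∫ x, x ^ 2 ∂F ≤ M ^ 2 + S ^ 2 := by
      have hexp : ∫ x, (x - M) ^ 2 ∂F = ∫ x, x ^ 2 ∂F - M ^ 2 := by
        have : ∀ x : ℝ, (x - M) ^ 2 = x ^ 2 - (2 * M * x - M ^ 2) := fun x => by ring
        simp_rw [this]
        have hlin : Integrable (fun x => 2 * M * x - M ^ 2) F :=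
          (hF.int_mean.const_mul _).sub (integrable_const _)
        rw [integral_sub hF.int_sq hlin, integral_sub (hF.int_mean.const_mul _) (integrable_const _), integral_const_mul, hF.mean]
        simp
        ring
      linarith [hF.var_le]
    have hlin : Integrable (fun y => p2 * (y - p1)) F :=
      (hF.int_mean.sub (integrable_const _)).const_mul _
    have hsqr : Integrable (fun y => (y ^ 2 - p1 ^ 2) / 2) F :=
      (hF.int_sq.sub (integrable_const _)).div_const _
    have hval : ∫ y, (p2 * (y - p1) - (y ^ 2 - p1 ^ 2) / 2) ∂F =
        p2 * (M - p1) - (∫ y, y ^ 2 ∂F - p1 ^ 2) / 2 := by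
      rw [integral_sub hlin hsqr, integral_const_mul, integral_div,
        integral_sub hF.int_mean (integrable_const _),
        integral_sub hF.int_sq (integrable_const _), hF.mean]
      simp
    rw [heq]
    have hquad : Integrable (fun y => p2 * (y - p1) - (y ^ 2 - p1 ^ 2) / 2) F := hlin.sub hsqr
    refine le_trans ?_ (integral_mono (hquad.div_const _) hinner
      (hA.le_setIntegral_Iic h1 h12))
    rw [integral_div, hval, le_div_iff₀ hD, ← hM]
    rw [← hM] at hS hsq
    nlinarith

theorem strictMonoOn_robustRatio :
    StrictMonoOn (fun x : ℝ => (2 * Real.exp (x - 1) - 1) / x ^ 2) (Set.Ici 1) := by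
  have hder : ∀ x : ℝ, x ≠ 0 → HasDerivAt (fun x : ℝ => (2 * Real.exp (x - 1) - 1) / x ^ 2)
      ((2 * Real.exp (x - 1) * x ^ 2 - (2 * Real.exp (x - 1) - 1) * (2 * x)) / (x ^ 2) ^ 2) x := by
    intro x hx
    have he : HasDerivAt (fun x : ℝ => 2 * Real.exp (x - 1) - 1) (2 * Real.exp (x - 1)) x := by
      simpa using (((hasDerivAt_id x).sub_const 1).exp.const_mul 2).sub_const 1
    have hp : HasDerivAt (fun x : ℝ => x ^ 2) (2 * x) x := by simpa using hasDerivAt_pow 2 x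
    exact he.div hp (pow_ne_zero 2 hx)
  refine strictMonoOn_of_deriv_pos (convex_Ici 1) (fun x hx => ?_) fun x hx => ?_
  · exact (hder x (zero_lt_one.trans_le hx).ne').continuousAt.continuousWithinAt
  · rw [interior_Ici, Set.mem_Ioi] at hx
    have hx0 : 0 < x := zero_lt_one.trans hx
    rw [(hder x hx0.ne').deriv]
    refine div_pos ?_ (by positivity)
    have h := Real.add_one_lt_exp (x := 1 - x) (by linarith)
    have hmul : Real.exp (x - 1) * Real.exp (1 - x) = 1 := by
      rw [← Real.exp_add]; simp
    have hpos := Real.exp_pos (x - 1)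
    have hkey : 0 < Real.exp (x - 1) * (x - 2) + 1 := by nlinarith
    nlinarith [mul_pos hx0 hkey]

/-- Let `F = F_1 × ⋯ × F_m` be a product distribution on `[0,∞)^m` where
each `F_j` has mean `μ > 0` and variance at most `σ²`, and let `F_Y` be the distribution of
the sum of the independent item values. Then the log-lottery on the full bundle with
parameters `(mμ, √m·σ)` satisfies `REV(P^log_{mμ,√m·σ};F_Y) ≥ OPT_m(F)/ρ(σ/(μ√m))`:
full bundling achieves robust approximation ratio at most `ρ(r/√m)` with `r = σ/μ`. -/
theorem stmt16 (m : ℕ) (hm : 0 < m) (μ σ : ℝ) (hμ : 0 < μ) (hσ : 0 ≤ σ)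
    (Fs : Fin m → Measure ℝ) (hmarg : ∀ j, MeanVarLe (Fs j) μ σ)
    (ρ : ℝ) (hρ1 : 1 ≤ ρ)
    (hρ2 : (2 * Real.exp (ρ - 1) - 1) / ρ ^ 2 = (σ / (μ * Real.sqrt m)) ^ 2 + 1)
    (A : Measure ℝ)
    (hA : ∃ p1 p2 : ℝ, 0 < p1 ∧ p1 ≤ p2 ∧
      p1 * (1 + Real.log (p2 / p1)) = m * μ ∧
      p1 * (2 * p2 - p1) = (m * μ) ^ 2 + (Real.sqrt m * σ) ^ 2 ∧
      IsLogLottery A p1 p2) :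
    optM m (Measure.pi Fs) / ρ ≤
      mrev A ((Measure.pi Fs).map (fun v => ∑ j, v j)) := by
  obtain ⟨p1, p2, h1, h12, hM, hS, hL⟩ := hA
  refine le_trans ?_ (hL.le_mrev h1 h12 hM hS (MeanVarLe.map_sum_pi hmarg))
  have hρ : 1 + Real.log (p2 / p1) = ρ := by
    have hlog : 0 ≤ Real.log (p2 / p1) := Real.log_nonneg ((one_le_div h1).2 h12)
    have hmpos : (0 : ℝ) < m := Nat.cast_pos.2 hm
    refine strictMonoOn_robustRatio.injOn (Set.mem_Ici.2 (by linarith)) hρ1 ?_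
    rw [hρ2, add_sub_cancel_left, Real.exp_log (div_pos (h1.trans_le h12) h1)]
    rw [mul_pow (Real.sqrt m), Real.sq_sqrt hmpos.le] at hS
    rw [div_pow, mul_pow, Real.sq_sqrt hmpos.le]
    set t := 1 + Real.log (p2 / p1)
    have ht : 0 < t := by positivity
    have hp : p1 = m * μ / t := by rw [← hM]; field_simp
    have hnum : 2 * (p2 / p1) - 1 = ((m * μ) ^ 2 + m * σ ^ 2) / p1 ^ 2 := by
      rw [← hS]; field_simp
    rw [hnum, hp]
    field_simp
    ring
  rw [div_le_iff₀ (by linarith), ← hρ, hM]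
  exact optM_pi_le hμ.le hmarg
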